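/- arXiv:2106.06864 — 3 statements merged into one kernel-verified Lean document; each statement's English description precedes it below -/
import Mathlib

section
/- Let n ≥ 3 and let v = (v_1,…,v_n) be a vector of nonnegative integers with v_1 ≥ 1, v_n ≥ 1 and v_1 + v_2 + ⋯ + v_n even. Then N_n(v) = N_n(v − e_n − e_{n−1}) + N_n(v − e_1) + Σ_{u ∈ ℕ^{n−2}, Σu odd} N_{n−2}(u) · N_n(v − r(ū) − e_n) + Σ_{u ∈ ℕ^{n−2}, u ≠ 0, Σu even} N_{n−2}(u) · N_n(v − r(ū) − e_1), where e_k is the k-th standard basis vector of ℤ^n, ū = (0, u_1, …, u_{n−2}, 0) ∈ ℤ^n, r(x) denotes the reverse of the vector x, and each sum has only finitely many nonzero terms (terms with a negative entry in the argument vanish by convention). -/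
/-- A word (list over `ℕ`) is down-up alternating if `w 1 > w 2 < w 3 > w 4 < ⋯`
(1-indexed). -/
def DownUpAlt (w : List ℕ) : Prop :=
  ∀ k : ℕ, k + 1 < w.length →
    if k % 2 = 0 then w.getD (k + 1) 0 < w.getD k 0 else w.getD k 0 < w.getD (k + 1) 0

/-- `NVec n v` is the number of down-up alternating words over `{1,…,n}` that are
empty or have first letter `≥ 2`, and in which letter `i` occurs exactly `v i`
times (it is `0` if some entry of `v` is negative). -/
noncomputable def NVec (n : ℕ) (v : Fin n → ℤ) : ℕ :=
  Nat.card {w : List ℕ // (∀ x ∈ w, 1 ≤ x ∧ x ≤ n) ∧ DownUpAlt w ∧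
    (w = [] ∨ 2 ≤ w.headI) ∧ ∀ i : Fin n, (w.count ((i : ℕ) + 1) : ℤ) = v i}

/-- `AltFrom b l` says that `l` is alternating, starting with a descent if `b = true` and with an
ascent if `b = false`. -/
def AltFrom : Bool → List ℕ → Prop
  | _, [] => True
  | _, [_] => True
  | b, x :: y :: l => (if b then y < x else x < y) ∧ AltFrom (!b) (y :: l)

@[simp] lemma altFrom_nil (b : Bool) : AltFrom b [] := trivial

@[simp] lemma altFrom_singleton (b : Bool) (x : ℕ) : AltFrom b [x] := trivial

@[simp] lemma altFrom_true_cons_cons (x y : ℕ) (l : List ℕ) :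
    AltFrom true (x :: y :: l) ↔ y < x ∧ AltFrom false (y :: l) := by
  simp [AltFrom]

@[simp] lemma altFrom_false_cons_cons (x y : ℕ) (l : List ℕ) :
    AltFrom false (x :: y :: l) ↔ x < y ∧ AltFrom true (y :: l) := by
  simp [AltFrom]

lemma altFrom_iff_getD (b : Bool) (l : List ℕ) :
    AltFrom b l ↔ ∀ k : ℕ, k + 1 < l.length →
      if (k % 2 = 0 ↔ b = true) then l.getD (k + 1) 0 < l.getD k 0
      else l.getD k 0 < l.getD (k + 1) 0 := by
  induction l generalizing b with
  | nil => simp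
  | cons x l ih =>
    cases l with
    | nil => simp
    | cons y l =>
      rw [AltFrom, ih]
      constructor
      · rintro ⟨h0, h⟩ k hk
        cases k with
        | zero => simpa using h0
        | succ k =>
          have := h k (by simpa using hk)
          have e : ((k + 1) % 2 = 0 ↔ b = true) ↔ (k % 2 = 0 ↔ (!b) = true) := by
            cases b <;> simp <;> omega
          simp only [e]
          simpa using this
      · intro h
        refine ⟨by simpa using h 0 (by simp), fun k hk => ?_⟩
        have := h (k + 1) (by simpa using hk)
        have e : ((k + 1) % 2 = 0 ↔ b = true) ↔ (k % 2 = 0 ↔ (!b) = true) := by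
          cases b <;> simp <;> omega
        simp only [e] at this
        simpa using this

lemma downUpAlt_iff_altFrom (l : List ℕ) : DownUpAlt l ↔ AltFrom true l := by
  simp [altFrom_iff_getD, DownUpAlt]

lemma altFrom_append_pair (b : Bool) (l : List ℕ) (x y : ℕ) :
    AltFrom b (l ++ [x, y]) ↔
      AltFrom b (l ++ [x]) ∧ (if b = l.length.bodd then x < y else y < x) := by
  induction l generalizing b with
  | nil => cases b <;> simp
  | cons a l ih =>
    cases l with
    | nil => cases b <;> simp
    | cons a' l =>
      simp only [List.cons_append, AltFrom] at ih ⊢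
      rw [ih, and_assoc]
      cases b <;> simp

lemma altFrom_reverse (b : Bool) (l : List ℕ) :
    AltFrom b l.reverse ↔ AltFrom (b == l.length.bodd) l := by
  induction l generalizing b with
  | nil => simp
  | cons x l ih =>
    cases l with
    | nil => simp
    | cons y l =>
      have := ih b
      simp only [List.reverse_cons, List.append_assoc, List.cons_append, List.nil_append] at this ⊢
      rw [altFrom_append_pair, this]
      cases b <;> cases h : l.length.bodd <;> simp [h, and_comm]

lemma altFrom_map_sub {n : ℕ} (b : Bool) {l : List ℕ} (hl : ∀ x ∈ l, x ≤ n) :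
    AltFrom b (l.map (n - ·)) ↔ AltFrom (!b) l := by
  induction l generalizing b with
  | nil => simp
  | cons x l ih =>
    cases l with
    | nil => simp
    | cons y l =>
      have := ih (!b) (fun z hz => hl z (List.mem_cons_of_mem _ hz))
      have hx := hl x (by simp)
      have hy := hl y (by simp)
      simp only [List.map_cons, AltFrom] at this ⊢
      rw [this]
      refine and_congr ?_ Iff.rfl
      cases b <;> simp <;> omega

lemma altFrom_true_cons_of_lt {n : ℕ} {c : List ℕ} (hc : ∀ x ∈ c, x < n) :
    AltFrom true (n :: c) ↔ AltFrom false c := by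
  cases c with
  | nil => simp
  | cons x c => simp [hc x (by simp)]

lemma altFrom_false_cons_of_lt {n : ℕ} {c : List ℕ} (hc : ∀ x ∈ c, n < x) :
    AltFrom false (n :: c) ↔ AltFrom true c := by
  cases c with
  | nil => simp
  | cons x c => simp [hc x (by simp)]

/-- A largest letter can only occur at a peak. -/
lemma altFrom_append_max {n : ℕ} {c : List ℕ} (hc : ∀ x ∈ c, x < n) :
    ∀ q : List ℕ, (∀ x ∈ q, x ≤ n) →
      (AltFrom true (q ++ n :: c) ↔ Even q.length ∧ AltFrom true q ∧ AltFrom false c)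
  | [], _ => by simp [altFrom_true_cons_of_lt hc]
  | [x], hq => by
    have := hq x (by simp)
    simp [this]
  | [x, y], hq => by
    have := hq x (by simp)
    simp [altFrom_true_cons_of_lt hc]
    omega
  | x :: y :: z :: q, hq => by
    have := altFrom_append_max hc (z :: q) (fun a ha => hq a (by simp at ha ⊢; tauto))
    simp only [List.cons_append] at this
    simp only [List.cons_append, altFrom_true_cons_cons, altFrom_false_cons_cons, this,
      List.length_cons, Nat.even_add_one, not_not]
    tauto

/-- In a word of even length, the letter `1` can only occur at a valley. -/
lemma altFrom_append_one {c : List ℕ} (hc : ∀ x ∈ c, 1 < x) :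
    ∀ q : List ℕ, (∀ x ∈ q, 1 ≤ x) → Even (q.length + 1 + c.length) →
      (AltFrom true (q ++ 1 :: c) ↔
        Odd q.length ∧ AltFrom true q ∧ 2 ≤ q.headI ∧ AltFrom true c)
  | [], _, he => by
    cases c with
    | nil => simp at he
    | cons x c =>
      have := hc x (by simp)
      simp
      omega
  | [x], _, _ => by
    simp [altFrom_false_cons_of_lt hc]
    omega
  | [x, y], hq, he => by
    have := hq y (by simp)
    simp [Nat.not_lt.2 this]
  | x :: y :: z :: q, hq, he => by
    have ih := altFrom_append_one hc (z :: q) (fun a ha => hq a (by simp at ha ⊢; tauto))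
      (by simp at he ⊢; grind)
    have hy := hq y (by simp)
    simp only [List.cons_append, List.headI_cons] at ih
    simp only [List.cons_append, altFrom_true_cons_cons, altFrom_false_cons_cons, ih,
      List.length_cons, Nat.odd_add_one, List.headI_cons, Nat.not_odd_iff_even,
      Nat.not_even_iff_odd]
    constructor
    · rintro ⟨h1, h2, h3, h4, h5, h6⟩
      exact ⟨h3, ⟨h1, h2, h4⟩, by omega, h6⟩
    · rintro ⟨h3, ⟨h1, h2, h4⟩, h5, h6⟩
      exact ⟨h1, h2, h3, h4, by omega, h6⟩

lemma AltFrom.two_le_headI {l : List ℕ} (h : AltFrom true l) (hl : ∀ x ∈ l, 1 ≤ x)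
    (hlen : l.length ≠ 1) : l = [] ∨ 2 ≤ l.headI := by
  match l with
  | [] => simp
  | [x] => simp at hlen
  | x :: y :: l =>
    have := hl y (by simp)
    have := (altFrom_true_cons_cons x y l).1 h
    right
    simp
    omega

/-- The set of words counted by `NVec n v`. -/
def alternatingWords (n : ℕ) (v : Fin n → ℤ) : Set (List ℕ) :=
  {w | (∀ x ∈ w, 1 ≤ x ∧ x ≤ n) ∧ DownUpAlt w ∧
    (w = [] ∨ 2 ≤ w.headI) ∧ ∀ i : Fin n, (w.count ((i : ℕ) + 1) : ℤ) = v i}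

lemma NVec_eq_ncard (n : ℕ) (v : Fin n → ℤ) : NVec n v = (alternatingWords n v).ncard := rfl

lemma finite_alternatingWords (n : ℕ) (v : Fin n → ℤ) : (alternatingWords n v).Finite := by
  rcases (alternatingWords n v).eq_empty_or_nonempty with h | ⟨w₀, h₀⟩
  · simp [h]
  · refine (List.finite_toSet w₀.permutations).subset fun w hw => ?_
    simp only [Set.mem_ofPred_eq, List.mem_permutations, List.perm_iff_count]
    intro a
    by_cases ha : 1 ≤ a ∧ a ≤ n
    · have e : a - 1 + 1 = a := by omega
      have h1 := hw.2.2.2 ⟨a - 1, by omega⟩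
      have h2 := h₀.2.2.2 ⟨a - 1, by omega⟩
      simp only [e] at h1 h2
      omega
    · rw [List.count_eq_zero_of_not_mem fun h => ha (hw.1 a h),
        List.count_eq_zero_of_not_mem fun h => ha (h₀.1 a h)]

lemma sum_count_eq_length {m : ℕ} {l : List ℕ} (hl : ∀ x ∈ l, 1 ≤ x ∧ x ≤ m) :
    ∑ i : Fin m, l.count ((i : ℕ) + 1) = l.length := by
  induction l with
  | nil => simp
  | cons x l ih =>
    have hx := hl x (by simp)
    have e : ∀ i : Fin m, (x == (i : ℕ) + 1) = true ↔ i = ⟨x - 1, by omega⟩ := by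
      intro i
      simp only [beq_iff_eq, Fin.ext_iff]
      omega
    simp only [List.count_cons, Finset.sum_add_distrib, e, List.length_cons]
    rw [ih fun y hy => hl y (List.mem_cons_of_mem _ hy)]
    simp

lemma length_eq_sum {n : ℕ} {v : Fin n → ℕ} {w : List ℕ} (hw : ∀ x ∈ w, 1 ≤ x ∧ x ≤ n)
    (hc : ∀ i : Fin n, (w.count ((i : ℕ) + 1) : ℤ) = v i) : w.length = ∑ i, v i := by
  rw [← sum_count_eq_length hw]
  exact Finset.sum_congr rfl fun i _ => Nat.cast_injective (hc i)

/-- Summing the sizes of the fibres of `f` over a set of values. -/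
lemma finsum_mem_ncard_fiber {α β : Type*} {T : Set α} (hT : T.Finite) (f : α → β) (s : Set β) :
    ∑ᶠ b ∈ s, {a ∈ T | f a = b}.ncard = {a ∈ T | f a ∈ s}.ncard := by
  classical
  have hs : {a ∈ T | f a ∈ s}.Finite := hT.subset fun a ha => ha.1
  have hfib : ∀ b ∈ s, {a ∈ T | f a = b}.ncard = (hs.toFinset.filter (f · = b)).card := by
    intro b hb
    rw [← Set.ncard_coe_finset]
    congr 1
    ext a
    simp only [Set.mem_ofPred_eq, Finset.coe_filter, Set.Finite.mem_toFinset]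
    constructor
    · rintro ⟨h1, rfl⟩
      exact ⟨⟨h1, hb⟩, rfl⟩
    · rintro ⟨⟨h1, -⟩, h2⟩
      exact ⟨h1, h2⟩
  rw [Set.ncard_eq_toFinset_card _ hs, Finset.card_eq_sum_card_image f,
    finsum_mem_congr rfl hfib]
  refine finsum_mem_eq_sum_of_inter_support_eq _ ?_
  ext b
  simp only [Set.mem_inter_iff, Function.mem_support, Finset.mem_coe, Finset.mem_image,
    Finset.card_ne_zero, Finset.Nonempty, Finset.mem_filter, Set.Finite.mem_toFinset,
    Set.mem_ofPred_eq]
  constructor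
  · rintro ⟨hb, a, ha, rfl⟩
    exact ⟨⟨a, ha, rfl⟩, a, ha, rfl⟩
  · rintro ⟨⟨a, ha, rfl⟩, -⟩
    exact ⟨ha.2, a, ha, rfl⟩

/-- The longest suffix of `w` avoiding the extreme letters `1` and `n`. -/
def innerTail (n : ℕ) (w : List ℕ) : List ℕ := w.rtakeWhile fun x => 2 ≤ x ∧ x ≤ n - 1

lemma innerTail_append {n z : ℕ} {c : List ℕ} (q : List ℕ) (hz : z = 1 ∨ z = n) (hn : 3 ≤ n)
    (hc : ∀ x ∈ c, 2 ≤ x ∧ x ≤ n - 1) : innerTail n (q ++ z :: c) = c := by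
  rw [innerTail, List.rtakeWhile, List.reverse_append, List.reverse_cons, List.append_assoc,
    List.takeWhile_append_of_pos (by simpa using hc)]
  have : ¬ (2 ≤ z ∧ z ≤ n - 1) := by omega
  simp [this]

lemma exists_eq_append_of_extreme_mem {n z : ℕ} (hz : z = 1 ∨ z = n) :
    ∀ w : List ℕ, (∀ x ∈ w, 1 ≤ x ∧ x ≤ n) → z ∈ w →
      ∃ q y c, w = q ++ y :: c ∧ (y = 1 ∨ y = n) ∧ ∀ x ∈ c, 2 ≤ x ∧ x ≤ n - 1
  | [], _, h => by simp at h
  | a :: w, hw, h => by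
    by_cases h' : 1 ∈ w ∨ n ∈ w
    · obtain ⟨q, y, c, rfl, hy, hc⟩ : ∃ q y c, w = q ++ y :: c ∧ (y = 1 ∨ y = n) ∧
          ∀ x ∈ c, 2 ≤ x ∧ x ≤ n - 1 := by
        have hw' : ∀ x ∈ w, 1 ≤ x ∧ x ≤ n := fun x hx => hw x (List.mem_cons_of_mem _ hx)
        rcases h' with h' | h'
        · exact exists_eq_append_of_extreme_mem (Or.inl rfl) w hw' h'
        · exact exists_eq_append_of_extreme_mem (Or.inr rfl) w hw' h'
      exact ⟨a :: q, y, c, rfl, hy, hc⟩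
    · push Not at h'
      refine ⟨[], a, w, rfl, ?_, fun x hx => ?_⟩
      · rcases List.mem_cons.1 h with rfl | h
        · exact hz
        · rcases hz with rfl | rfl
          · exact absurd h h'.1
          · exact absurd h h'.2
      · have := hw x (List.mem_cons_of_mem _ hx)
        have h1 : x ≠ 1 := fun e => h'.1 (e ▸ hx)
        have h2 : x ≠ n := fun e => h'.2 (e ▸ hx)
        omega

/-- The words of `alternatingWords n v` whose last extreme letter is `z`, followed by a suffix
satisfying `P`. -/
def wordsWithTail (n : ℕ) (v : Fin n → ℤ) (z : ℕ) (P : List ℕ → Prop) : Set (List ℕ) :=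
  {w ∈ alternatingWords n v | ∃ q c, w = q ++ z :: c ∧ (∀ x ∈ c, 2 ≤ x ∧ x ≤ n - 1) ∧ P c}

lemma finite_wordsWithTail (n : ℕ) (v : Fin n → ℤ) (z : ℕ) (P : List ℕ → Prop) :
    (wordsWithTail n v z P).Finite :=
  (finite_alternatingWords n v).subset fun _ hw => hw.1

lemma disjoint_wordsWithTail {n z z' : ℕ} (v : Fin n → ℤ) {P Q : List ℕ → Prop} (hn : 3 ≤ n)
    (hz : z = 1 ∨ z = n) (hz' : z' = 1 ∨ z' = n) (h : z = z' → ∀ c, P c → ¬ Q c) :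
    Disjoint (wordsWithTail n v z P) (wordsWithTail n v z' Q) := by
  rw [Set.disjoint_left]
  rintro _ ⟨-, q, c, rfl, hc, hP⟩ ⟨-, q', c', e, hc', hQ⟩
  have hcc := congrArg (innerTail n) e
  rw [innerTail_append q hz hn hc, innerTail_append q' hz' hn hc'] at hcc
  subst hcc
  have := (List.append_inj_right' e (by simp))
  exact h (by simpa using this) c hP hQ

lemma pred_lt_of_pos_of_le {a m : ℕ} (h : 1 ≤ a ∧ a ≤ m) : a - 1 < m := by omega

/-- The vector `r(ū)`: pad `u` by zeros on both sides and reverse. -/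
def paddedReverse (n : ℕ) (u : Fin (n - 2) → ℕ) : Fin n → ℤ := fun i =>
  if h : 1 ≤ n - 1 - (i : ℕ) ∧ n - 1 - (i : ℕ) ≤ n - 2 then
    (u ⟨n - 1 - (i : ℕ) - 1, pred_lt_of_pos_of_le h⟩ : ℤ) else 0

/-- The multiplicities in `innerTail n w`, listed from the letter `n - 1` down to `2`. -/
def tailContent (n : ℕ) (w : List ℕ) : Fin (n - 2) → ℕ :=
  fun i => (innerTail n w).count (n - 1 - (i : ℕ))

lemma count_map_sub {n : ℕ} {p : List ℕ} (hp : ∀ x ∈ p, x ≤ n) {a : ℕ} (ha : a ≤ n) :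
    (p.map (n - ·)).count a = p.count (n - a) := by
  induction p with
  | nil => simp
  | cons x p ih =>
    have hx := hp x (by simp)
    have e : (n - x == a) = (x == n - a) := by
      rw [Bool.eq_iff_iff, beq_iff_eq, beq_iff_eq]
      omega
    rw [List.map_cons, List.count_cons, List.count_cons, e,
      ih fun y hy => hp y (List.mem_cons_of_mem _ hy)]

lemma map_sub_map_sub {n : ℕ} {p : List ℕ} (hp : ∀ x ∈ p, x ≤ n) :
    (p.map (n - ·)).map (n - ·) = p := by
  rw [List.map_map]
  refine (List.map_congr_left fun x hx => ?_).trans (List.map_id p)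
  have := hp x hx
  simp only [Function.comp, id]
  omega

lemma count_map_sub_eq_paddedReverse {n : ℕ} (hn : 3 ≤ n) {p : List ℕ}
    (hp : ∀ x ∈ p, 1 ≤ x ∧ x ≤ n - 2) {u : Fin (n - 2) → ℕ}
    (hu : ∀ i : Fin (n - 2), p.count ((i : ℕ) + 1) = u i) (i : Fin n) :
    ((p.map (n - ·)).count ((i : ℕ) + 1) : ℤ) = paddedReverse n u i := by
  have hi := i.2
  rw [count_map_sub (fun x hx => by have := hp x hx; omega) (by omega), paddedReverse]
  split_ifs with h
  · rw [← hu]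
    congr 2
    simp only
    omega
  · rw [List.count_eq_zero_of_not_mem]
    · rfl
    · intro hm
      have := hp _ hm
      omega

/-- Removing a fixed suffix `t`. -/
lemma NVec_eq_ncard_append {n : ℕ} {v v' : Fin n → ℤ} (t : List ℕ)
    (ht : ∀ x ∈ t, 1 ≤ x ∧ x ≤ n) (hv : ∀ i, v' i = v i - t.count ((i : ℕ) + 1))
    (H : ∀ q : List ℕ, (∀ x ∈ q, 1 ≤ x ∧ x ≤ n) →
      (∀ i : Fin n, ((q ++ t).count ((i : ℕ) + 1) : ℤ) = v i) →
      (DownUpAlt q ∧ (q = [] ∨ 2 ≤ q.headI) ↔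
        DownUpAlt (q ++ t) ∧ (q ++ t = [] ∨ 2 ≤ (q ++ t).headI))) :
    NVec n v' = {w ∈ alternatingWords n v | ∃ q, w = q ++ t}.ncard := by
  rw [NVec_eq_ncard, ← Set.ncard_image_of_injective _ (List.append_left_injective t)]
  congr 1
  have hcount : ∀ q : List ℕ, (∀ i : Fin n, (q.count ((i : ℕ) + 1) : ℤ) = v' i) ↔
      ∀ i : Fin n, ((q ++ t).count ((i : ℕ) + 1) : ℤ) = v i := by
    refine fun q => forall_congr' fun i => ?_
    rw [hv, List.count_append]
    push_cast
    exact eq_sub_iff_add_eq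
  ext w
  constructor
  · rintro ⟨q, ⟨hq, ha, hh, hc⟩, rfl⟩
    rw [hcount] at hc
    have := (H q hq hc).1 ⟨ha, hh⟩
    refine ⟨⟨fun x hx => ?_, this.1, this.2, hc⟩, q, rfl⟩
    rcases List.mem_append.1 hx with hx | hx
    exacts [hq x hx, ht x hx]
  · rintro ⟨⟨hw, ha, hh, hc⟩, q, rfl⟩
    have hq : ∀ x ∈ q, 1 ≤ x ∧ x ≤ n := fun x hx => hw x (List.mem_append_left _ hx)
    have := (H q hq hc).2 ⟨ha, hh⟩
    exact ⟨q, ⟨hq, this.1, this.2, (hcount q).2 hc⟩, rfl⟩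

/-- Splitting a word `q z c` at its last extreme letter `z`, where `c` is encoded through
the letter reversal `x ↦ n - x` and the rearrangement `ρ` by a word on `n - 2` letters. -/
lemma NVec_mul_NVec_eq_ncard {n : ℕ} (hn : 3 ≤ n) {v : Fin n → ℕ} (heven : Even (∑ i, v i))
    (k : Fin n) (hk : (k : ℕ) + 1 = 1 ∨ (k : ℕ) + 1 = n) (ρ : List ℕ → List ℕ)
    (hperm : ∀ l, (ρ l).Perm l) (hinv : ∀ l, ρ (ρ l) = l) (P : List ℕ → Prop)
    (u : Fin (n - 2) → ℕ)
    (H : ∀ p q : List ℕ, (∀ x ∈ p, 1 ≤ x ∧ x ≤ n - 2) → (∀ x ∈ q, 1 ≤ x ∧ x ≤ n) →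
      p.length = ∑ i, u i → Even (q.length + 1 + p.length) →
      ((DownUpAlt p ∧ (p = [] ∨ 2 ≤ p.headI)) ∧ DownUpAlt q ∧ (q = [] ∨ 2 ≤ q.headI) ↔
        DownUpAlt (q ++ ((k : ℕ) + 1) :: ρ (p.map (n - ·))) ∧ P (ρ (p.map (n - ·))))) :
    NVec (n - 2) (fun i => (u i : ℤ)) *
        NVec n ((fun i => (v i : ℤ)) - paddedReverse n u - Pi.single k 1) =
      {w ∈ wordsWithTail n (fun i => (v i : ℤ)) ((k : ℕ) + 1) P | tailContent n w = u}.ncard := by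
  have hcount : ∀ p q : List ℕ, (∀ x ∈ p, 1 ≤ x ∧ x ≤ n - 2) →
      (∀ i : Fin (n - 2), p.count ((i : ℕ) + 1) = u i) →
      ((∀ i : Fin n, (q.count ((i : ℕ) + 1) : ℤ) =
          ((fun i => (v i : ℤ)) - paddedReverse n u - Pi.single k 1 : Fin n → ℤ) i) ↔
        ∀ i : Fin n, ((q ++ ((k : ℕ) + 1) :: ρ (p.map (n - ·))).count ((i : ℕ) + 1) : ℤ)
          = v i) := by
    intro p q hp hu
    refine forall_congr' fun i => ?_
    have h1 := count_map_sub_eq_paddedReverse hn hp hu i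
    rw [List.count_append, List.count_cons, (hperm _).count_eq]
    simp only [Pi.sub_apply, ← h1, Pi.single_apply, Fin.ext_iff, beq_iff_eq]
    push_cast
    split_ifs <;> omega
  have hinner : ∀ p : List ℕ, (∀ x ∈ p, 1 ≤ x ∧ x ≤ n - 2) →
      ∀ x ∈ ρ (p.map (n - ·)), 2 ≤ x ∧ x ≤ n - 1 := by
    intro p hp x hx
    rw [(hperm _).mem_iff, List.mem_map] at hx
    obtain ⟨y, hy, rfl⟩ := hx
    have := hp y hy
    omega
  have hletters : ∀ p q : List ℕ, (∀ x ∈ p, 1 ≤ x ∧ x ≤ n - 2) → (∀ x ∈ q, 1 ≤ x ∧ x ≤ n) →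
      ∀ x ∈ q ++ ((k : ℕ) + 1) :: ρ (p.map (n - ·)), 1 ≤ x ∧ x ≤ n := by
    intro p q hp hq x hx
    rcases List.mem_append.1 hx with hx | hx
    · exact hq x hx
    · rcases List.mem_cons.1 hx with rfl | hx
      · omega
      · have := hinner p hp x hx
        omega
  have hlen : ∀ p q : List ℕ, (q ++ ((k : ℕ) + 1) :: ρ (p.map (n - ·))).length =
      q.length + 1 + p.length := by
    intro p q
    rw [List.length_append, List.length_cons, (hperm _).length_eq, List.length_map]
    omega
  rw [NVec_eq_ncard, NVec_eq_ncard, ← Set.ncard_prod]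
  rw [← Set.InjOn.ncard_image
    (f := fun pq : List ℕ × List ℕ => pq.2 ++ ((k : ℕ) + 1) :: ρ (pq.1.map (n - ·)))]
  · congr 1
    ext w
    constructor
    · rintro ⟨⟨p, q⟩, ⟨⟨hp, hpa, hph, hpc⟩, ⟨hq, hqa, hqh, hqc⟩⟩, rfl⟩
      dsimp only at *
      have hpc' : ∀ i : Fin (n - 2), p.count ((i : ℕ) + 1) = u i :=
        fun i => Nat.cast_injective (hpc i)
      have hpl := length_eq_sum hp hpc
      have hwc := (hcount p q hp hpc').1 hqc
      have hw := hletters p q hp hq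
      have hev := heven
      rw [← length_eq_sum hw hwc] at hev
      have hev' := hev
      rw [hlen] at hev'
      obtain ⟨ha, hP⟩ := (H p q hp hq hpl hev').1 ⟨⟨hpa, hph⟩, hqa, hqh⟩
      refine ⟨⟨⟨hw, ha, ?_, hwc⟩, q, _, rfl, hinner p hp, hP⟩, ?_⟩
      · refine ((downUpAlt_iff_altFrom _).1 ha).two_le_headI (fun x hx => (hw x hx).1) ?_
        intro h
        rw [h] at hev
        simp at hev
      · funext i
        rw [tailContent, innerTail_append q hk hn (hinner p hp), (hperm _).count_eq,
          count_map_sub (fun x hx => by have := hp x hx; omega) (by omega), ← hpc']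
        congr 1
        omega
    · rintro ⟨⟨⟨hw, ha, hh, hwc⟩, q, c, rfl, hc, hP⟩, hu⟩
      have hcn : ∀ x ∈ ρ c, x ≤ n := by
        intro x hx
        have := hc x ((hperm c).mem_iff.1 hx)
        omega
      obtain ⟨p, rfl, hp⟩ : ∃ p : List ℕ, c = ρ (p.map (n - ·)) ∧
          ∀ x ∈ p, 1 ≤ x ∧ x ≤ n - 2 := by
        refine ⟨(ρ c).map (n - ·), by rw [map_sub_map_sub hcn, hinv], fun x hx => ?_⟩
        obtain ⟨y, hy, rfl⟩ := List.mem_map.1 hx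
        have := hc y ((hperm c).mem_iff.1 hy)
        omega
      have hq : ∀ x ∈ q, 1 ≤ x ∧ x ≤ n := fun x hx => hw x (List.mem_append_left _ hx)
      have hpc : ∀ i : Fin (n - 2), p.count ((i : ℕ) + 1) = u i := by
        intro i
        rw [← hu, tailContent, innerTail_append q hk hn hc, (hperm _).count_eq,
          count_map_sub (fun x hx => by have := hp x hx; omega) (by omega)]
        congr 1
        omega
      have hpl : p.length = ∑ i, u i := length_eq_sum hp fun i => congrArg _ (hpc i)
      have hev := heven
      rw [← length_eq_sum hw hwc] at hev
      rw [hlen] at hev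
      obtain ⟨⟨hpa, hph⟩, hqa, hqh⟩ := (H p q hp hq hpl hev).2 ⟨ha, hP⟩
      exact ⟨(p, q), ⟨⟨hp, hpa, hph, fun i => congrArg _ (hpc i)⟩,
        ⟨hq, hqa, hqh, (hcount p q hp hpc).2 hwc⟩⟩, rfl⟩
  · rintro ⟨p, q⟩ ⟨⟨hp, -⟩, -⟩ ⟨p', q'⟩ ⟨⟨hp', -⟩, -⟩ e
    dsimp only at *
    have h1 := congrArg (innerTail n) e
    rw [innerTail_append q hk hn (hinner p hp), innerTail_append q' hk hn (hinner p' hp')] at h1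
    have h2 := congrArg ρ h1
    rw [hinv, hinv] at h2
    have h3 := congrArg (List.map (n - ·)) h2
    rw [map_sub_map_sub (fun x hx => by have := hp x hx; omega),
      map_sub_map_sub (fun x hx => by have := hp' x hx; omega)] at h3
    rw [h1] at e
    rw [h3, List.append_cancel_right e]

lemma wordsWithTail_eq_sep {n z : ℕ} {v : Fin n → ℤ} {c : List ℕ}
    (hc : ∀ x ∈ c, 2 ≤ x ∧ x ≤ n - 1) :
    wordsWithTail n v z (· = c) = {w ∈ alternatingWords n v | ∃ q, w = q ++ z :: c} := by
  ext w
  constructor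
  · rintro ⟨hw, q, c, rfl, -, rfl⟩
    exact ⟨hw, q, rfl⟩
  · rintro ⟨hw, q, rfl⟩
    exact ⟨hw, q, c, rfl, hc, rfl⟩

lemma sum_tailContent {n z : ℕ} (hn : 3 ≤ n) (hz : z = 1 ∨ z = n) (q : List ℕ) {c : List ℕ}
    (hc : ∀ x ∈ c, 2 ≤ x ∧ x ≤ n - 1) : ∑ i, tailContent n (q ++ z :: c) i = c.length := by
  have hcn : ∀ x ∈ c, x ≤ n := fun x hx => by have := hc x hx; omega
  have hm : ∀ x ∈ c.map (n - ·), 1 ≤ x ∧ x ≤ n - 2 := by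
    intro x hx
    obtain ⟨y, hy, rfl⟩ := List.mem_map.1 hx
    have := hc y hy
    omega
  rw [← List.length_map (f := (n - ·)) (as := c), ← sum_count_eq_length hm]
  refine Finset.sum_congr rfl fun i _ => ?_
  rw [tailContent, innerTail_append q hz hn hc, count_map_sub hcn (by omega)]
  congr 1
  omega

lemma ncard_alternatingWords_eq_add {n : ℕ} (hn : 3 ≤ n) (v : Fin n → ℤ)
    {k : Fin n} (hk : (k : ℕ) = 0) (h1 : 1 ≤ v k) :
    (alternatingWords n v).ncard =
      (wordsWithTail n v n (· = [n - 1])).ncard + (wordsWithTail n v 1 (· = [])).ncard +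
      (wordsWithTail n v n (· ≠ [n - 1])).ncard + (wordsWithTail n v 1 (· ≠ [])).ncard := by
  have hd {z z' : ℕ} {P Q : List ℕ → Prop} := disjoint_wordsWithTail (z := z) (z' := z') v
    (P := P) (Q := Q) hn
  have hf := finite_wordsWithTail n v
  rw [← Set.ncard_union_eq _ (hf _ _) (hf _ _), ← Set.ncard_union_eq _ _ (hf _ _),
    ← Set.ncard_union_eq _ _ (hf _ _)]
  · congr 1
    ext w
    constructor
    · intro hw
      have hmem : 1 ∈ w := by
        have := hw.2.2.2 k
        simp only [hk, zero_add] at this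
        exact List.count_pos_iff.1 (by omega)
      obtain ⟨q, y, c, rfl, rfl | rfl, hc⟩ :=
        exists_eq_append_of_extreme_mem (Or.inl rfl) w hw.1 hmem
      · by_cases h : c = []
        · exact Or.inl (Or.inl (Or.inr ⟨hw, q, c, rfl, hc, h⟩))
        · exact Or.inr ⟨hw, q, c, rfl, hc, h⟩
      · by_cases h : c = [y - 1]
        · exact Or.inl (Or.inl (Or.inl ⟨hw, q, c, rfl, hc, h⟩))
        · exact Or.inl (Or.inr ⟨hw, q, c, rfl, hc, h⟩)
    · rintro (((h | h) | h) | h) <;> exact h.1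
  · refine Set.disjoint_union_left.2 ⟨Set.disjoint_union_left.2 ⟨?_, ?_⟩, ?_⟩
    · exact hd (by simp) (by simp) (by omega)
    · exact hd (by simp) (by simp) (by simp)
    · exact hd (by simp) (by simp) (by omega)
  · exact ((hf _ _).union (hf _ _)).union (hf _ _)
  · refine Set.disjoint_union_left.2 ⟨?_, ?_⟩
    · exact hd (by simp) (by simp) (by simp)
    · exact hd (by simp) (by simp) (by omega)
  · exact (hf _ _).union (hf _ _)
  · exact hd (by simp) (by simp) (by omega)

lemma NVec_sub_max_sub {n : ℕ} (hn : 3 ≤ n) {v : Fin n → ℕ} (heven : Even (∑ i, v i))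
    {k k' : Fin n} (hk : (k : ℕ) + 1 = n) (hk' : (k' : ℕ) + 2 = n) :
    NVec n ((fun i => (v i : ℤ)) - Pi.single k 1
        - Pi.single k' 1) =
      (wordsWithTail n (fun i => (v i : ℤ)) n (· = [n - 1])).ncard := by
  have hc : ∀ x ∈ [n - 1], 2 ≤ x ∧ x ≤ n - 1 := by simp; omega
  have hlt : ∀ x ∈ [n - 1], x < n := by simp; omega
  have ht : ∀ x ∈ [n, n - 1], 1 ≤ x ∧ x ≤ n := by simp; omega
  rw [wordsWithTail_eq_sep hc]
  refine NVec_eq_ncard_append _ ht (fun i => ?_) fun q hq hqc => ?_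
  · have := i.2
    simp only [Pi.sub_apply, Pi.single_apply, Fin.ext_iff, List.count_cons, List.count_nil,
      beq_iff_eq]
    split_ifs <;> omega
  · have hl : ∀ x ∈ q ++ [n, n - 1], 1 ≤ x ∧ x ≤ n := by
      intro x hx
      rcases List.mem_append.1 hx with hx | hx
      exacts [hq x hx, ht x hx]
    have hlen := heven
    rw [← length_eq_sum hl hqc] at hlen
    have hqe : Even q.length := by
      simp only [List.length_append, List.length_cons, List.length_nil] at hlen
      grind
    rw [downUpAlt_iff_altFrom, downUpAlt_iff_altFrom,
      altFrom_append_max hlt q fun x hx => (hq x hx).2]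
    constructor
    · rintro ⟨ha, hh⟩
      refine ⟨⟨hqe, ha, by simp⟩, Or.inr ?_⟩
      cases q with
      | nil => simp; omega
      | cons x q => simpa using hh
    · rintro ⟨⟨-, ha, -⟩, -⟩
      refine ⟨ha, ha.two_le_headI (fun x hx => (hq x hx).1) fun h => ?_⟩
      simp [h] at hqe

lemma NVec_sub_min {n : ℕ} (hn : 3 ≤ n) {v : Fin n → ℕ} (heven : Even (∑ i, v i))
    {k : Fin n} (hk : (k : ℕ) = 0) :
    NVec n ((fun i => (v i : ℤ)) - Pi.single k 1) =
      (wordsWithTail n (fun i => (v i : ℤ)) 1 (· = [])).ncard := by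
  have ht : ∀ x ∈ [1], 1 ≤ x ∧ x ≤ n := by simp; omega
  rw [wordsWithTail_eq_sep (by simp)]
  refine NVec_eq_ncard_append _ ht (fun i => ?_) fun q hq hqc => ?_
  · simp only [Pi.sub_apply, Pi.single_apply, Fin.ext_iff, List.count_cons, List.count_nil,
      beq_iff_eq]
    split_ifs <;> omega
  · have hl : ∀ x ∈ q ++ [1], 1 ≤ x ∧ x ≤ n := by
      intro x hx
      rcases List.mem_append.1 hx with hx | hx
      exacts [hq x hx, ht x hx]
    have hlen := heven
    rw [← length_eq_sum hl hqc] at hlen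
    simp only [List.length_append, List.length_cons, List.length_nil] at hlen
    rw [downUpAlt_iff_altFrom, downUpAlt_iff_altFrom,
      altFrom_append_one (by simp) q (fun x hx => (hq x hx).1) (by simpa using hlen)]
    cases q with
    | nil => simp at hlen
    | cons x q =>
      have hodd : Odd (x :: q).length := by grind
      simp only [hodd]
      simp

lemma finsum_odd_eq_ncard {n : ℕ} (hn : 3 ≤ n) {v : Fin n → ℕ} (heven : Even (∑ i, v i))
    {k : Fin n} (hk : (k : ℕ) + 1 = n) :
    ∑ᶠ u ∈ {u : Fin (n - 2) → ℕ | Odd (∑ i, u i)}, NVec (n - 2) (fun i => (u i : ℤ)) *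
        NVec n ((fun i => (v i : ℤ)) - paddedReverse n u - Pi.single k 1) =
      (wordsWithTail n (fun i => (v i : ℤ)) n (· ≠ [n - 1])).ncard := by
  have key : ∀ u ∈ {u : Fin (n - 2) → ℕ | Odd (∑ i, u i)}, _ :=
    fun u hu => NVec_mul_NVec_eq_ncard hn heven k
      (Or.inr hk) id (fun _ => .refl _) (fun _ => rfl) (· ≠ [n - 1]) u <| by
    intro p q hp hq hpl hev
    have hu : Odd (∑ i, u i) := hu
    rw [← hpl] at hu
    have hqe : Even q.length := by grind
    have hpn : ∀ x ∈ p, x ≤ n := fun x hx => by have := hp x hx; omega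
    have hlt : ∀ x ∈ p.map (n - ·), x < n := by
      intro x hx
      obtain ⟨y, hy, rfl⟩ := List.mem_map.1 hx
      have := hp y hy
      omega
    simp only [hk, id, downUpAlt_iff_altFrom]
    rw [altFrom_append_max hlt q fun x hx => (hq x hx).2, altFrom_map_sub _ hpn]
    have hqh (ha : AltFrom true q) : q = [] ∨ 2 ≤ q.headI :=
      ha.two_le_headI (fun x hx => (hq x hx).1) fun h => by simp [h] at hqe
    have hph (ha : AltFrom true p) : (p = [] ∨ 2 ≤ p.headI) ↔ p.map (n - ·) ≠ [n - 1] := by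
      match p, hp with
      | [], _ => simp
      | [x], hp =>
        have := hp x (by simp)
        simp
        omega
      | x :: y :: p, hp =>
        have := ha.two_le_headI (fun x hx => (hp x hx).1) (by simp)
        simp at this
        simp [this]
    simp only [Bool.not_false]
    tauto
  rw [finsum_mem_congr rfl key]
  simp only [hk]
  rw [finsum_mem_ncard_fiber (finite_wordsWithTail _ _ _ _)]
  congr 1
  refine Set.sep_eq_self_iff_mem_true.2 ?_
  rintro _ ⟨⟨hw, ha, -, hwc⟩, q, c, rfl, hc, -⟩
  have hlen := heven
  rw [← length_eq_sum hw hwc] at hlen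
  rw [downUpAlt_iff_altFrom, altFrom_append_max (fun x hx => by have := hc x hx; omega) q
    fun x hx => (hw x (List.mem_append_left _ hx)).2] at ha
  have := ha.1
  simp only [List.length_append, List.length_cons] at hlen
  rw [Set.mem_ofPred_eq, sum_tailContent hn (Or.inr rfl) q hc]
  grind

lemma finsum_even_eq_ncard {n : ℕ} (hn : 3 ≤ n) {v : Fin n → ℕ} (heven : Even (∑ i, v i))
    {k : Fin n} (hk : (k : ℕ) = 0) :
    ∑ᶠ u ∈ {u : Fin (n - 2) → ℕ | u ≠ 0 ∧ Even (∑ i, u i)},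
        NVec (n - 2) (fun i => (u i : ℤ)) *
        NVec n ((fun i => (v i : ℤ)) - paddedReverse n u - Pi.single k 1) =
      (wordsWithTail n (fun i => (v i : ℤ)) 1 (· ≠ [])).ncard := by
  have key : ∀ u ∈ {u : Fin (n - 2) → ℕ | u ≠ 0 ∧ Even (∑ i, u i)}, _ :=
    fun u hu => NVec_mul_NVec_eq_ncard hn heven k
      (Or.inl (by omega)) List.reverse List.reverse_perm (fun _ => List.reverse_reverse _) (· ≠ []) u <| by
    obtain ⟨hu0, hue⟩ : u ≠ 0 ∧ Even (∑ i, u i) := hu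
    intro p q hp hq hpl hev
    rw [← hpl] at hue
    have hqo : Odd q.length := by grind
    have hp0 : p ≠ [] := by
      rintro rfl
      refine hu0 (funext fun i => ?_)
      exact (Finset.sum_eq_zero_iff.1 hpl.symm) i (Finset.mem_univ i)
    have hq0 : q ≠ [] := by
      rintro rfl
      simp at hqo
    have hpn : ∀ x ∈ p, x ≤ n := fun x hx => by have := hp x hx; omega
    have hgt : ∀ x ∈ (p.map (n - ·)).reverse, 1 < x := by
      intro x hx
      obtain ⟨y, hy, rfl⟩ := List.mem_map.1 (List.mem_reverse.1 hx)
      have := hp y hy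
      omega
    have hbodd : p.length.bodd = false := by
      obtain ⟨m, hm⟩ := hue
      simp [hm]
    simp only [downUpAlt_iff_altFrom, hk, zero_add]
    rw [altFrom_append_one hgt q (fun x hx => (hq x hx).1) (by simpa using hev),
      altFrom_reverse, List.length_map, hbodd, altFrom_map_sub _ hpn]
    have hph (ha : AltFrom true p) : p = [] ∨ 2 ≤ p.headI :=
      ha.two_le_headI (fun x hx => (hp x hx).1) fun h => by simp [h] at hue
    simp [hp0, hq0, hqo] at hph ⊢
    tauto
  rw [finsum_mem_congr rfl key]
  simp only [hk, zero_add]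
  rw [finsum_mem_ncard_fiber (finite_wordsWithTail _ _ _ _)]
  congr 1
  refine Set.sep_eq_self_iff_mem_true.2 ?_
  rintro _ ⟨⟨hw, ha, -, hwc⟩, q, c, rfl, hc, hne⟩
  have hlen := heven
  rw [← length_eq_sum hw hwc] at hlen
  simp only [List.length_append, List.length_cons] at hlen
  rw [downUpAlt_iff_altFrom, altFrom_append_one (fun x hx => by have := hc x hx; omega) q
    (fun x hx => (hw x (List.mem_append_left _ hx)).1) (by grind)] at ha
  have := ha.1
  have hsum := sum_tailContent hn (Or.inl rfl) q hc
  refine ⟨fun h => hne ?_, ?_⟩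
  · rw [h] at hsum
    simpa using hsum.symm
  · rw [hsum]
    grind

theorem stmt6 (n : ℕ) (hn : 3 ≤ n) (v : Fin n → ℕ)
    (h1 : 1 ≤ v ⟨0, by omega⟩) (hlast : 1 ≤ v ⟨n - 1, by omega⟩)
    (heven : Even (∑ i, v i)) :
    NVec n (fun i => (v i : ℤ)) =
      NVec n ((fun i => (v i : ℤ)) - Pi.single ⟨n - 1, by omega⟩ 1
        - Pi.single ⟨n - 2, by omega⟩ 1)
      + NVec n ((fun i => (v i : ℤ)) - Pi.single ⟨0, by omega⟩ 1)
      + ∑ᶠ u ∈ {u : Fin (n - 2) → ℕ | Odd (∑ i, u i)},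
          NVec (n - 2) (fun i => (u i : ℤ)) *
            NVec n ((fun i => (v i : ℤ))
              - (fun i : Fin n =>
                  if h : 1 ≤ n - 1 - (i : ℕ) ∧ n - 1 - (i : ℕ) ≤ n - 2 then
                    (u ⟨n - 1 - (i : ℕ) - 1, by omega⟩ : ℤ) else 0)
              - Pi.single ⟨n - 1, by omega⟩ 1)
      + ∑ᶠ u ∈ {u : Fin (n - 2) → ℕ | u ≠ 0 ∧ Even (∑ i, u i)},
          NVec (n - 2) (fun i => (u i : ℤ)) *
            NVec n ((fun i => (v i : ℤ))
              - (fun i : Fin n =>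
                  if h : 1 ≤ n - 1 - (i : ℕ) ∧ n - 1 - (i : ℕ) ≤ n - 2 then
                    (u ⟨n - 1 - (i : ℕ) - 1, by omega⟩ : ℤ) else 0)
              - Pi.single ⟨0, by omega⟩ 1) := by
  have hmax : n - 1 + 1 = n := Nat.sub_add_cancel (by omega)
  rw [NVec_sub_max_sub hn heven hmax (Nat.sub_add_cancel (by omega)),
    NVec_sub_min hn heven rfl]
  refine (ncard_alternatingWords_eq_add hn _ rfl (by exact_mod_cast h1)).trans ?_
  rw [← finsum_odd_eq_ncard hn heven (k := ⟨n - 1, by omega⟩) hmax,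
    ← finsum_even_eq_ncard hn heven (k := ⟨0, by omega⟩) rfl]
  rfl
end

section
/- Fix an integer n ≥ 0 and an integer d with −n ≤ d ≤ n+1. Let s = n if d ≡ n (mod 2) and s = n+1 otherwise, and let k = ⌊(n+d)/2⌋. Define f : ℕ → ℕ by f(m) = N(n, (s−d)/2 + m, (s+d)/2 + m) (the diagonal sequence of the matrix M_n along j − i = d, starting from its first term). Then f is an arithmetic sequence of order k, i.e., its (k+1)-st forward difference is identically zero. -/
/-- `N3 a b c` is the number of down-up alternating words over `{1,2,3}` that are
empty or have first letter `≥ 2`, containing exactly `a` ones, `b` twos and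
`c` threes (it is `0` if some argument is negative). -/
noncomputable def N3 (a b c : ℤ) : ℕ :=
  Nat.card {w : List ℕ // (∀ x ∈ w, 1 ≤ x ∧ x ≤ 3) ∧ DownUpAlt w ∧
    (w = [] ∨ 2 ≤ w.headI) ∧
    (w.count 1 : ℤ) = a ∧ (w.count 2 : ℤ) = b ∧ (w.count 3 : ℤ) = c}

/-- Forward difference of an integer sequence. -/
def fdiff (f : ℕ → ℤ) : ℕ → ℤ := fun m => f (m + 1) - f m

/-- `BlockWord odd top p a m w` says that `w` is a concatenation of blocks `21`, `31`, `32` in which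
no `32` is followed by `21`, and which does not begin with a letter `2` if `top = true`. If
`odd = true` the last block is a `21` or `31` with its letter `1` removed. The numbers `p`, `a`, `m`
count the blocks `21`, `31`, `32`, the truncated block included. -/
inductive BlockWord : Bool → Bool → ℕ → ℕ → ℕ → List ℕ → Prop
  | nil (top : Bool) : BlockWord false top 0 0 0 []
  | single_two : BlockWord true false 1 0 0 [2]
  | single_three (top : Bool) : BlockWord true top 0 1 0 [3]
  | cons_two_one {odd : Bool} {p a m : ℕ} {w : List ℕ} :
      BlockWord odd false p a m w → BlockWord odd false (p + 1) a m (2 :: 1 :: w)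
  | cons_three_one {odd : Bool} (top : Bool) {p a m : ℕ} {w : List ℕ} :
      BlockWord odd false p a m w → BlockWord odd top p (a + 1) m (3 :: 1 :: w)
  | cons_three_two {odd : Bool} (top : Bool) {p a m : ℕ} {w : List ℕ} :
      BlockWord odd true p a m w → BlockWord odd top p a (m + 1) (3 :: 2 :: w)

/-- The set of block words with prescribed block counts. -/
def blockWords (odd top : Bool) (p a m : ℕ) : Set (List ℕ) := {w | BlockWord odd top p a m w}

theorem downUpAlt_of_length_le_one {w : List ℕ} (hw : w.length ≤ 1) : DownUpAlt w := by
  intro k hk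
  omega

theorem downUpAlt_cons_cons {x y : ℕ} {w : List ℕ} :
    DownUpAlt (x :: y :: w) ↔ y < x ∧ (w = [] ∨ y < w.headI) ∧ DownUpAlt w := by
  constructor
  · intro h
    refine ⟨by simpa using h 0 (by simp), ?_, ?_⟩
    · cases w with
      | nil => exact Or.inl rfl
      | cons z w => exact Or.inr (by simpa using h 1 (by simp))
    · intro k hk
      have := h (k + 2) (by simp; omega)
      simpa [Nat.add_mod_right] using this
  · rintro ⟨h₁, h₂, h₃⟩ k hk
    match k with
    | 0 => simpa using h₁
    | 1 =>
      cases w with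
      | nil => simp at hk
      | cons z w => simpa using h₂
    | k + 2 =>
      have := h₃ k (by simp at hk; omega)
      simpa [Nat.add_mod_right] using this

theorem BlockWord.sound {odd top : Bool} {p a m : ℕ} {w : List ℕ}
    (h : BlockWord odd top p a m w) :
    ((∀ x ∈ w, 1 ≤ x ∧ x ≤ 3) ∧ DownUpAlt w ∧ (w = [] ∨ 2 + top.toNat ≤ w.headI)) ∧
      w.count 1 + odd.toNat = p + a ∧ w.count 2 = p + m ∧ w.count 3 = a + m := by
  induction h with
  | nil top => simp [downUpAlt_of_length_le_one]
  | single_two => simp [downUpAlt_of_length_le_one]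
  | single_three top => cases top <;> simp [downUpAlt_of_length_le_one]
  | cons_two_one h ih =>
    obtain ⟨⟨h₁, h₂, h₃⟩, h₄, h₅, h₆⟩ := ih
    refine ⟨⟨by simpa using h₁, downUpAlt_cons_cons.2 ⟨by simp, ?_, h₂⟩, by simp⟩, ?_⟩
    · exact h₃.imp_right fun h => by simp at h; omega
    · simp; omega
  | cons_three_one top h ih =>
    obtain ⟨⟨h₁, h₂, h₃⟩, h₄, h₅, h₆⟩ := ih
    refine ⟨⟨by simpa using h₁, downUpAlt_cons_cons.2 ⟨by simp, ?_, h₂⟩,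
      by cases top <;> simp⟩, ?_⟩
    · exact h₃.imp_right fun h => by simp at h; omega
    · simp; omega
  | cons_three_two top h ih =>
    obtain ⟨⟨h₁, h₂, h₃⟩, h₄, h₅, h₆⟩ := ih
    refine ⟨⟨by simpa using h₁, downUpAlt_cons_cons.2 ⟨by simp, ?_, h₂⟩,
      by cases top <;> simp⟩, ?_⟩
    · exact h₃.imp_right fun h => by simp at h; omega
    · simp; omega

theorem exists_blockWord (top : Bool) (w : List ℕ) (hw : ∀ x ∈ w, 1 ≤ x ∧ x ≤ 3)
    (halt : DownUpAlt w) (hhead : w = [] ∨ 2 + top.toNat ≤ w.headI) :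
    ∃ odd p a m, BlockWord odd top p a m w := by
  match w with
  | [] => exact ⟨_, _, _, _, .nil top⟩
  | [x] =>
    simp only [List.mem_singleton, forall_eq, List.headI_cons, reduceCtorEq, false_or] at hw hhead
    obtain rfl | rfl : x = 2 ∨ x = 3 := by omega
    · cases top with
      | false => exact ⟨_, _, _, _, .single_two⟩
      | true => simp at hhead
    · exact ⟨_, _, _, _, .single_three top⟩
  | x :: y :: w =>
    obtain ⟨hyx, hyw, halt'⟩ := downUpAlt_cons_cons.1 halt
    have hx := hw x (by simp)
    have hy := hw y (by simp)
    have hw' : ∀ z ∈ w, 1 ≤ z ∧ z ≤ 3 := fun z hz => hw z (by simp [hz])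
    simp only [List.headI_cons, reduceCtorEq, false_or] at hhead
    obtain rfl | rfl : y = 1 ∨ y = 2 := by omega
    · obtain ⟨odd, p, a, m, h⟩ := exists_blockWord false w hw' halt'
        (hyw.imp_right fun h => by simp; omega)
      obtain rfl | rfl : x = 2 ∨ x = 3 := by omega
      · cases top with
        | false => exact ⟨_, _, _, _, h.cons_two_one⟩
        | true => simp at hhead
      · exact ⟨_, _, _, _, h.cons_three_one top⟩
    · obtain ⟨odd, p, a, m, h⟩ := exists_blockWord true w hw' halt'
        (hyw.imp_right fun h => by simp; omega)
      obtain rfl : x = 3 := by omega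
      exact ⟨_, _, _, _, h.cons_three_two top⟩

theorem N3_eq_ncard_blockWords (odd : Bool) {n p a m : ℕ} (hn : n + odd.toNat = p + a) :
    N3 n (p + m : ℕ) (a + m : ℕ) = (blockWords odd false p a m).ncard := by
  rw [N3, ← Nat.card_coe_set_eq]
  refine Nat.card_congr (Equiv.subtypeEquivRight fun w => ?_)
  simp only [Nat.cast_inj]
  constructor
  · rintro ⟨hw, halt, hhead, h₁, h₂, h₃⟩
    obtain ⟨odd', p', a', m', h⟩ := exists_blockWord false w hw halt (by simpa using hhead)
    obtain ⟨-, h₄, h₅, h₆⟩ := h.sound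
    have hodd : odd' = odd := by
      cases odd <;> cases odd' <;> simp at * <;> omega
    subst hodd
    obtain ⟨rfl, rfl, rfl⟩ : p' = p ∧ a' = a ∧ m' = m := by omega
    exact h
  · intro h
    obtain ⟨⟨h₁, h₂, h₃⟩, h₄, h₅, h₆⟩ := BlockWord.sound h
    exact ⟨h₁, h₂, by simpa using h₃, by omega, h₅, h₆⟩

theorem encard_image_cons_cons (x y : ℕ) (S : Set (List ℕ)) :
    ((fun w => x :: y :: w) '' S).encard = S.encard :=
  Function.Injective.encard_image (fun _ _ h => by simpa using h) S

theorem blockWords_false_zero (odd : Bool) (a m : ℕ) :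
    blockWords odd false 0 a m = blockWords odd true 0 a m := by
  ext w
  constructor
  · rintro (_ | _ | _ | h | ⟨_, h⟩ | ⟨_, h⟩) <;> constructor <;> assumption
  · rintro (_ | _ | _ | h | ⟨_, h⟩ | ⟨_, h⟩) <;> constructor <;> assumption

theorem encard_blockWords_false_succ {odd : Bool} {p a m : ℕ}
    (h : odd = false ∨ p + a + m ≠ 0) :
    (blockWords odd false (p + 1) a m).encard =
      (blockWords odd true (p + 1) a m).encard + (blockWords odd false p a m).encard := by
  rw [← encard_image_cons_cons 2 1 (blockWords odd false p a m), ← Set.encard_union_eq]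
  · congr 1
    ext w
    constructor
    · rintro (_ | _ | _ | h' | ⟨_, h'⟩ | ⟨_, h'⟩)
      · simp at h
      · exact Or.inr ⟨_, h', rfl⟩
      · exact Or.inl (h'.cons_three_one _)
      · exact Or.inl (h'.cons_three_two _)
    · rintro (h' | ⟨w, h', rfl⟩)
      · rcases h' with _ | _ | _ | h' | ⟨_, h'⟩ | ⟨_, h'⟩
        · exact h'.cons_three_one _
        · exact h'.cons_three_two _
      · exact BlockWord.cons_two_one h'
  · rw [Set.disjoint_left]
    rintro _ h' ⟨w, -, rfl⟩
    cases h'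

theorem encard_blockWords_true_succ_zero {odd : Bool} {p a : ℕ}
    (h : odd = false ∨ p + a ≠ 0) :
    (blockWords odd true p (a + 1) 0).encard = (blockWords odd false p a 0).encard := by
  rw [← encard_image_cons_cons 3 1 (blockWords odd false p a 0)]
  congr 1
  ext w
  constructor
  · rintro (_ | _ | _ | h' | ⟨_, h'⟩ | ⟨_, h'⟩)
    · simp at h
    · exact ⟨_, h', rfl⟩
  · rintro ⟨w, h', rfl⟩
    exact BlockWord.cons_three_one _ h'

theorem encard_blockWords_true_succ_succ (odd : Bool) (p a m : ℕ) :
    (blockWords odd true p (a + 1) (m + 1)).encard =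
      (blockWords odd false p a (m + 1)).encard + (blockWords odd true p (a + 1) m).encard := by
  rw [← encard_image_cons_cons 3 1 (blockWords odd false p a (m + 1)),
    ← encard_image_cons_cons 3 2 (blockWords odd true p (a + 1) m), ← Set.encard_union_eq]
  · congr 1
    ext w
    constructor
    · rintro (_ | _ | _ | h' | ⟨_, h'⟩ | ⟨_, h'⟩)
      · exact Or.inl ⟨_, h', rfl⟩
      · exact Or.inr ⟨_, h', rfl⟩
    · rintro (⟨w, h', rfl⟩ | ⟨w, h', rfl⟩)
      · exact BlockWord.cons_three_one _ h'
      · exact BlockWord.cons_three_two _ h'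
  · rw [Set.disjoint_left]
    rintro _ ⟨w, -, rfl⟩ ⟨w', -, h⟩
    simp at h

theorem encard_blockWords_true_zero_succ (odd : Bool) (p m : ℕ) :
    (blockWords odd true p 0 (m + 1)).encard = (blockWords odd true p 0 m).encard := by
  rw [← encard_image_cons_cons 3 2 (blockWords odd true p 0 m)]
  congr 1
  ext w
  constructor
  · rintro (_ | _ | _ | h' | ⟨_, h'⟩ | ⟨_, h'⟩)
    exact ⟨_, h', rfl⟩
  · rintro ⟨w, h', rfl⟩
    exact BlockWord.cons_three_two _ h'

theorem blockWords_false_true_zero : blockWords false true 0 0 0 = {[]} := by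
  ext w
  constructor
  · rintro ⟨⟩
    rfl
  · rintro rfl
    exact .nil _

theorem blockWords_true_true_one : blockWords true true 0 1 0 = {[3]} := by
  ext w
  constructor
  · rintro (_ | _ | _ | h' | ⟨_, h'⟩ | ⟨_, h'⟩)
    · rfl
    · cases h'
  · rintro rfl
    exact .single_three _

theorem blockWords_true_false_one : blockWords true false 1 0 0 = {[2]} := by
  ext w
  constructor
  · rintro (_ | _ | _ | h' | ⟨_, h'⟩ | ⟨_, h'⟩)
    · rfl
    · cases h'
  · rintro rfl
    exact .single_two

theorem blockWords_true_succ_zero (odd : Bool) (p : ℕ) :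
    blockWords odd true (p + 1) 0 0 = ∅ := by
  ext w
  constructor
  · rintro ⟨⟩
  · rintro ⟨⟩

theorem blockWords_true_true_zero_right (p m : ℕ) : blockWords true true p 0 m = ∅ := by
  induction m with
  | zero =>
    ext w
    constructor
    · rintro ⟨⟩
    · rintro ⟨⟩
  | succ m ih =>
    rw [← Set.encard_eq_zero, encard_blockWords_true_zero_succ, ih, Set.encard_empty]

theorem encard_blockWords_even (a : ℕ) :
    (∀ p m, (blockWords false true p a m).encard =
      (a.multichoose p * (a + 1).multichoose m : ℕ)) ∧
    ∀ p m, (blockWords false false p a m).encard =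
      ((a + 1).multichoose p * (a + 1).multichoose m : ℕ) := by
  have step : ∀ a, (∀ p m, (blockWords false true p a m).encard =
      (a.multichoose p * (a + 1).multichoose m : ℕ)) →
      ∀ p m, (blockWords false false p a m).encard =
        ((a + 1).multichoose p * (a + 1).multichoose m : ℕ) := by
    intro a ih p m
    induction p with
    | zero => rw [blockWords_false_zero, ih]; simp
    | succ p ihp =>
      rw [encard_blockWords_false_succ (Or.inl rfl), ih, ihp, Nat.multichoose_succ_succ a p]
      push_cast
      ring
  have key : ∀ p m, (blockWords false true p a m).encard =
      (a.multichoose p * (a + 1).multichoose m : ℕ) := by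
    induction a with
    | zero =>
      intro p m
      induction m with
      | zero =>
        cases p with
        | zero => simp [blockWords_false_true_zero]
        | succ p => simp [blockWords_true_succ_zero]
      | succ m ih => simpa [encard_blockWords_true_zero_succ] using ih
    | succ a iha =>
      intro p m
      induction m with
      | zero => simp [encard_blockWords_true_succ_zero, step a iha]
      | succ m ihm =>
        rw [encard_blockWords_true_succ_succ, step a iha, ihm,
          Nat.multichoose_succ_succ (a + 1) m]
        push_cast
        ring
  exact ⟨key, step a key⟩

theorem encard_blockWords_odd (a : ℕ) :
    (∀ p m, p + a ≠ 0 → (blockWords true true p a m).encard =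
      (a.multichoose p * a.multichoose m : ℕ)) ∧
    ∀ p m, p + a + m ≠ 0 → (blockWords true false p a m).encard =
      ((a + 1).multichoose p * a.multichoose m : ℕ) := by
  have step : ∀ a, (∀ p m, p + a ≠ 0 → (blockWords true true p a m).encard =
      (a.multichoose p * a.multichoose m : ℕ)) →
      ∀ p m, p + a + m ≠ 0 → (blockWords true false p a m).encard =
        ((a + 1).multichoose p * a.multichoose m : ℕ) := by
    intro a ih p m h
    induction p with
    | zero =>
      rw [blockWords_false_zero]
      cases a with
      | zero =>
        obtain ⟨m, rfl⟩ : ∃ m', m = m' + 1 := ⟨m - 1, by omega⟩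
        simp [blockWords_true_true_zero_right]
      | succ a => rw [ih _ _ (by omega)]; simp
    | succ p ihp =>
      by_cases h0 : p + a + m = 0
      · obtain ⟨rfl, rfl, rfl⟩ : p = 0 ∧ a = 0 ∧ m = 0 := by omega
        simp [blockWords_true_false_one]
      · rw [encard_blockWords_false_succ (Or.inr h0), ih _ _ (by omega), ihp h0,
          Nat.multichoose_succ_succ a p]
        push_cast
        ring
  have key : ∀ p m, p + a ≠ 0 → (blockWords true true p a m).encard =
      (a.multichoose p * a.multichoose m : ℕ) := by
    induction a with
    | zero =>
      intro p m h
      obtain ⟨p, rfl⟩ : ∃ p', p = p' + 1 := ⟨p - 1, by omega⟩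
      simp [blockWords_true_true_zero_right]
    | succ a iha =>
      intro p m h
      induction m with
      | zero =>
        by_cases h0 : p + a = 0
        · obtain ⟨rfl, rfl⟩ : p = 0 ∧ a = 0 := by omega
          simp [blockWords_true_true_one]
        · rw [encard_blockWords_true_succ_zero (Or.inr h0), step a iha _ _ h0]
          simp
      | succ m ihm =>
        rw [encard_blockWords_true_succ_succ, step a iha _ _ (by omega), ihm,
          Nat.multichoose_succ_succ a m]
        push_cast
        ring
  exact ⟨key, step a key⟩

theorem iterate_fdiff_multichoose (c : ℤ) (k r : ℕ) :
    fdiff^[k + 1] (fun m => c * ((k + 1).multichoose (m + r) : ℕ)) = 0 := by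
  induction k generalizing r with
  | zero => ext m; simp [fdiff]
  | succ k ih =>
    rw [Function.iterate_succ_apply, ← ih (r + 1)]
    congr 1
    ext m
    have : m + 1 + r = m + r + 1 := by ring
    simp only [fdiff, this, Nat.multichoose_succ_succ (k + 1) (m + r), ← add_assoc]
    push_cast
    ring

theorem stmt11 (n : ℕ) (d : ℤ) (hd1 : -(n : ℤ) ≤ d) (hd2 : d ≤ (n : ℤ) + 1) :
    let s : ℤ := if (2 : ℤ) ∣ (d - n) then (n : ℤ) else (n : ℤ) + 1
    let k : ℕ := (((n : ℤ) + d) / 2).toNat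
    fdiff^[k + 1]
      (fun m : ℕ => (N3 (n : ℤ) ((s - d) / 2 + m) ((s + d) / 2 + m) : ℤ)) = 0 := by
  intro s k
  by_cases hpar : (2 : ℤ) ∣ d - n
  · have hs : s = n := if_pos hpar
    rw [← iterate_fdiff_multichoose ((k + 1).multichoose (n - k) : ℕ) k 0]
    congr 1
    ext m
    have h₁ : (s - d) / 2 + m = ((n - k + m : ℕ) : ℤ) := by omega
    have h₂ : (s + d) / 2 + m = ((k + m : ℕ) : ℤ) := by omega
    rw [h₁, h₂, N3_eq_ncard_blockWords false (by simp; omega), Set.ncard,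
      (encard_blockWords_even k).2]
    simp
  · have hs : s = n + 1 := if_neg hpar
    rw [← iterate_fdiff_multichoose ((k + 1 + 1).multichoose (n - k) : ℕ) k 0]
    congr 1
    ext m
    have h₁ : (s - d) / 2 + m = ((n - k + m : ℕ) : ℤ) := by omega
    have h₂ : (s + d) / 2 + m = ((k + 1 + m : ℕ) : ℤ) := by omega
    rw [h₁, h₂, N3_eq_ncard_blockWords true (by simp; omega), Set.ncard,
      (encard_blockWords_odd (k + 1)).2 _ _ (by omega)]
    simp
end

section
/- For all nonnegative integers n, i, j with i + j < n, one has N(n, i, j) = 0. (The first nonzero anti-diagonal of the matrix M_n is the one with i + j = n.) -/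
/-- Dropping the first two letters preserves the down-up alternating property. -/
lemma DownUpAlt.tail_tail {a b : ℕ} {l : List ℕ} (h : DownUpAlt (a :: b :: l)) :
    DownUpAlt l := by
  intro k hk
  simpa using h (k + 2) (by simp only [List.length_cons]; omega)

/-- In a down-up alternating word over `{1,2,3}` that does not start with `1`, the ones are at
most as many as the other letters. -/
lemma DownUpAlt.count_one_le : ∀ w : List ℕ, (∀ x ∈ w, 1 ≤ x ∧ x ≤ 3) → DownUpAlt w →
    (w = [] ∨ 2 ≤ w.headI) → w.count 1 ≤ w.count 2 + w.count 3
  | [], _, _, _ => by simp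
  | [a], hw, _, h0 => by
    have := hw a (by simp)
    have : a = 2 ∨ a = 3 := by simp at h0; omega
    rcases this with rfl | rfl <;> simp
  | a :: b :: l, hw, h, h0 => by
    have hb := hw b (by simp)
    have hl : l = [] ∨ 2 ≤ l.headI := by
      cases l with
      | nil => simp
      | cons c l =>
        have hbc : b < c := by simpa using h 1 (by simp)
        right
        simp
        omega
    have ih := DownUpAlt.count_one_le l (fun x hx => hw x (by simp [hx])) h.tail_tail hl
    have ha := hw a (by simp)
    have : a = 2 ∨ a = 3 := by simp at h0; omega
    simp only [List.count_cons, beq_iff_eq]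
    split_ifs <;> omega

theorem stmt14 (n i j : ℕ) (h : i + j < n) :
    N3 (n : ℤ) (i : ℤ) (j : ℤ) = 0 := by
  have : IsEmpty {w : List ℕ // (∀ x ∈ w, 1 ≤ x ∧ x ≤ 3) ∧ DownUpAlt w ∧
      (w = [] ∨ 2 ≤ w.headI) ∧
      (w.count 1 : ℤ) = n ∧ (w.count 2 : ℤ) = i ∧ (w.count 3 : ℤ) = j} := by
    refine ⟨fun ⟨w, hw, halt, h0, h1, h2, h3⟩ => ?_⟩
    have := DownUpAlt.count_one_le w hw halt h0
    omega
  exact Nat.card_of_isEmpty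
end
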